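/- For 1 < p < 2, the first Fourier sine coefficient satisfies a_1(p) = 2∫₀¹ sin_p(π_p x) sin(πx) dx ≥ 1, and hence b_1(p) = (π/π_p) a_1(p) ≥ π/π_p. Moreover for p > 2, a_1(p) > 8/π², using the strict concavity of sin_p(π_p x) on (0,1/2). -/

import Mathlib

open Real Set

noncomputable def Fp (p y : ℝ) : ℝ := ∫ t in (0:ℝ)..y, (1 - t ^ p) ^ (-(1/p))

noncomputable def pip (p : ℝ) : ℝ := 2 * Fp p 1

/-!
Write `w p t = (1 - t ^ p) ^ (-1 / p)` for the integrand of `Fp p`. For `p < q` the quotient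
`w p / w q` is strictly increasing on `(0, 1)`, because its logarithmic derivative is
`(t ^ (p - 1) - t ^ (q - 1)) / ((1 - t ^ p) * (1 - t ^ q))`. Integrating the cross inequality
`w p t * w q u < w p u * w q t` over `0 < t < y < u < 1` shows that the normalised primitive
`Fp p y / Fp p 1` is smaller than `Fp q y / Fp q 1`, so that the normalised inverse
`x ↦ sin_p (π_p x)` decreases strictly with `p` on `(0, 1 / 2)`. For `p < 2 = q` it therefore lies
above `sin (π x)`. The same integration with the constant function `1` in place of `w q`
expresses the concavity of `sin_p` and puts the normalised inverse above the tent `2 x`, for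
every `p > 1`. By reflection in `1 / 2` it only remains to compute the integrals of
`sin (π x) * sin (π x)` and `2 x * sin (π x)` over `[0, 1 / 2]`. The bound on `b_1` follows by
integration by parts, as `sin_p` is Lipschitz.
-/

open MeasureTheory (volume ae_restrict_iff')
open intervalIntegral

section Integrals

theorem integral_lt_integral_of_forall_Ioo_lt {f g : ℝ → ℝ} {a b : ℝ} (hab : a < b)
    (hf : IntervalIntegrable f volume a b) (hg : IntervalIntegrable g volume a b)
    (hfg : ∀ x ∈ Ioo a b, f x < g x) : ∫ x in a..b, f x < ∫ x in a..b, g x := by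
  have hpos := intervalIntegral_pos_of_pos_on (hg.sub hf) (fun x hx => sub_pos.2 (hfg x hx)) hab
  rwa [integral_sub hg hf, sub_pos] at hpos

theorem integral_mul_integral_lt_of_cross_lt {f g : ℝ → ℝ} {a b c : ℝ} (hac : a < c) (hcb : c < b)
    (hf : IntervalIntegrable f volume a b) (hg : IntervalIntegrable g volume a b)
    (hfg : ∀ t ∈ Ioo a c, ∀ u ∈ Ioo c b, f t * g u < f u * g t) :
    (∫ t in a..c, f t) * ∫ t in a..b, g t < (∫ t in a..c, g t) * ∫ t in a..b, f t := by
  have hleft : uIcc a c ⊆ uIcc a b := uIcc_subset_uIcc_left (Icc_subset_uIcc ⟨hac.le, hcb.le⟩)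
  have hright : uIcc c b ⊆ uIcc a b := uIcc_subset_uIcc_right (Icc_subset_uIcc ⟨hac.le, hcb.le⟩)
  have hf₁ := hf.mono_set hleft
  have hf₂ := hf.mono_set hright
  have hg₁ := hg.mono_set hleft
  have hg₂ := hg.mono_set hright
  have hinner : ∀ u ∈ Ioo c b, (∫ t in a..c, f t) * g u < (∫ t in a..c, g t) * f u := by
    intro u hu
    have := integral_lt_integral_of_forall_Ioo_lt hac (hf₁.mul_const (g u)) (hg₁.const_mul (f u))
      fun t ht => hfg t ht u hu
    rwa [integral_mul_const, integral_const_mul, mul_comm (f u)] at this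
  have houter := integral_lt_integral_of_forall_Ioo_lt hcb (hg₂.const_mul _) (hf₂.const_mul _)
    hinner
  rw [integral_const_mul, integral_const_mul] at houter
  rw [← integral_add_adjacent_intervals hf₁ hf₂, ← integral_add_adjacent_intervals hg₁ hg₂]
  linarith

theorem integral_eq_two_nsmul_of_reflection {E : Type*} [NormedAddCommGroup E] [NormedSpace ℝ E]
    {f : ℝ → E} {a c : ℝ} (hf : IntervalIntegrable f volume a c)
    (hsymm : ∀ x, f (c - x) = f (c + x)) :
    ∫ x in a..(2 * c - a), f x = 2 • ∫ x in a..c, f x := by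
  have hreflect : (fun x => f (2 * c - x)) = f := by
    ext x
    convert (hsymm (x - c)).trans _ using 2 <;> ring_nf
  have hright : IntervalIntegrable f volume c (2 * c - a) := by
    have := (hf.comp_sub_left (2 * c)).symm
    rwa [hreflect, show 2 * c - c = c by ring] at this
  have hfold : ∫ x in c..(2 * c - a), f x = ∫ x in a..c, f x := by
    have := integral_comp_sub_left (a := a) (b := c) f (2 * c)
    rwa [hreflect, show 2 * c - c = c by ring, eq_comm] at this
  rw [← integral_add_adjacent_intervals hf hright, hfold, two_nsmul]

theorem two_mul_integral_mul_sin_pi_lt {f g : ℝ → ℝ} (hf : ContinuousOn f (Icc 0 1))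
    (hg : Continuous g) (hsymm : ∀ x, f (1 / 2 - x) = f (1 / 2 + x))
    (hgf : ∀ x ∈ Ioo (0 : ℝ) (1 / 2), g x < f x) :
    2 * ∫ x in (0 : ℝ)..(1 / 2), g x * sin (π * x) < ∫ x in (0 : ℝ)..1, f x * sin (π * x) := by
  have hint : IntervalIntegrable (fun x => f x * sin (π * x)) volume 0 (1 / 2) := by
    refine ContinuousOn.intervalIntegrable_of_Icc (by norm_num) (.mul (hf.mono ?_) (by fun_prop))
    exact Icc_subset_Icc_right (by norm_num)
  have hfold : ∫ x in (0 : ℝ)..1, f x * sin (π * x) =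
      2 * ∫ x in (0 : ℝ)..(1 / 2), f x * sin (π * x) := by
    have := integral_eq_two_nsmul_of_reflection hint fun x => by
      rw [hsymm, ← sin_pi_sub]
      ring_nf
    simpa using this
  rw [hfold, mul_lt_mul_iff_right₀ two_pos]
  refine integral_lt_integral_of_forall_Ioo_lt (by norm_num)
    (Continuous.intervalIntegrable (by fun_prop) _ _) hint fun x hx => ?_
  refine mul_lt_mul_of_pos_right (hgf x hx) (sin_pos_of_pos_of_lt_pi ?_ ?_) <;>
    nlinarith [pi_pos, hx.1, hx.2]

theorem integral_sin_pi_mul_sin_pi_half :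
    ∫ x in (0 : ℝ)..(1 / 2), sin (π * x) * sin (π * x) = 1 / 4 := by
  simp only [← pow_two]
  rw [integral_comp_mul_left (fun x => sin x ^ 2) pi_ne_zero, integral_sin_sq, mul_one_div,
    cos_pi_div_two, mul_zero, sin_zero, smul_eq_mul]
  field_simp
  norm_num

theorem integral_two_mul_mul_sin_pi_half :
    ∫ x in (0 : ℝ)..(1 / 2), 2 * x * sin (π * x) = 2 / π ^ 2 := by
  have hderiv : ∀ x : ℝ, HasDerivAt
      (fun x => 2 * (sin (π * x) / π ^ 2 - x * cos (π * x) / π)) (2 * x * sin (π * x)) x := by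
    intro x
    have hlin : HasDerivAt (fun x : ℝ => π * x) π x := by
      simpa using (hasDerivAt_id x).const_mul π
    refine (((hlin.sin.div_const (π ^ 2)).sub
      (((hasDerivAt_id x).mul hlin.cos).div_const π)).const_mul 2).congr_deriv ?_
    simp only [id]
    field_simp
    ring
  rw [integral_eq_sub_of_hasDerivAt (fun x _ => hderiv x)
    (Continuous.intervalIntegrable (by fun_prop) _ _), mul_one_div, sin_pi_div_two, cos_pi_div_two]
  simp [div_eq_mul_inv]

theorem integral_deriv_mul_cos_mul {f : ℝ → ℝ} {a b : ℝ}
    (hf : AbsolutelyContinuousOnInterval f a b) (ha : f a = 0) (hb : f b = 0) (c : ℝ) :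
    ∫ x in a..b, deriv f x * cos (c * x) = c * ∫ x in a..b, f x * sin (c * x) := by
  have hcos : AbsolutelyContinuousOnInterval (fun x => cos (c * x)) a b :=
    ContDiffOn.absolutelyContinuousOnInterval (by fun_prop)
  have hderiv : ∀ x, deriv (fun x => cos (c * x)) x = -(c * sin (c * x)) := by
    intro x
    rw [deriv_comp_mul_left c cos x, Real.deriv_cos, smul_eq_mul, mul_neg]
  have hparts := hcos.integral_mul_deriv_eq_deriv_mul hf
  simp only [hderiv, ha, hb, mul_zero, sub_zero, zero_sub, ← integral_neg] at hparts
  rw [← integral_const_mul]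
  refine (integral_congr fun x _ => mul_comm _ _).trans
    (hparts.trans (integral_congr fun x _ => ?_))
  ring

end Integrals

theorem lipschitzOnWith_Icc_of_reflection {α : Type*} [PseudoEMetricSpace α] {f : ℝ → α}
    {K : NNReal} {a c : ℝ} (hf : LipschitzOnWith K f (Icc a c))
    (hsymm : ∀ x, f (c - x) = f (c + x)) : LipschitzOnWith K f (Icc a (2 * c - a)) := by
  have hfold : f = f ∘ fun x => c - |x - c| := by
    ext x
    rcases abs_cases (x - c) with ⟨h, -⟩ | ⟨h, -⟩
    · simp only [Function.comp, h, hsymm, add_sub_cancel]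
    · simp only [Function.comp, h, sub_neg_eq_add, add_sub_cancel]
  have hlip : LipschitzWith 1 fun x => c - |x - c| := by
    simpa [Real.dist_eq] using (LipschitzWith.const c).sub (LipschitzWith.dist_left c)
  rw [hfold, ← mul_one K]
  refine hf.comp hlip.lipschitzOnWith fun x hx => ⟨?_, by linarith [abs_nonneg (x - c)]⟩
  have : |x - c| ≤ c - a := abs_le.2 ⟨by linarith [hx.1], by linarith [hx.2]⟩
  linarith

/-- The integrand of `Fp p`, that is, the derivative of the inverse of `sin_p` on `[0, 1)`. At
`t = 1` its value is the junk value `0 ^ (-(1 / p)) = 0` rather than `∞` when `p > 0`. -/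
noncomputable def fpDensity (p t : ℝ) : ℝ := (1 - t ^ p) ^ (-(1 / p))

section Density

variable {p q t u : ℝ}

theorem one_sub_rpow_pos (hp : 0 < p) (ht : t ∈ Ico (0 : ℝ) 1) : 0 < 1 - t ^ p :=
  sub_pos.2 (rpow_lt_one ht.1 ht.2 hp)

theorem fpDensity_zero (hp : 0 < p) : fpDensity p 0 = 1 := by
  simp [fpDensity, zero_rpow hp.ne']

theorem strictMonoOn_fpDensity (hp : 0 < p) : StrictMonoOn (fpDensity p) (Ico 0 1) :=
  fun _ ht _ hu htu => rpow_lt_rpow_of_neg (one_sub_rpow_pos hp hu)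
    (sub_lt_sub_left (rpow_lt_rpow ht.1 htu hp) 1) (by simpa)

theorem one_lt_fpDensity (hp : 0 < p) (ht : t ∈ Ioo (0 : ℝ) 1) : 1 < fpDensity p t := by
  rw [← fpDensity_zero hp]
  exact strictMonoOn_fpDensity hp (by simp) (Ioo_subset_Ico_self ht) ht.1

theorem hasDerivAt_neg_log_one_sub_rpow_div (hp : 0 < p) (ht : t ∈ Ioo (0 : ℝ) 1) :
    HasDerivAt (fun t => -(log (1 - t ^ p) / p)) (t ^ (p - 1) / (1 - t ^ p)) t := by
  have hbase := one_sub_rpow_pos hp (Ioo_subset_Ico_self ht)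
  refine ((((hasDerivAt_rpow_const (Or.inl ht.1.ne')).const_sub 1).log hbase.ne').div_const
    p).neg.congr_deriv ?_
  field_simp

theorem rpow_sub_one_div_one_sub_rpow_lt (hp : 0 < p) (hpq : p < q) (ht : t ∈ Ioo (0 : ℝ) 1) :
    t ^ (q - 1) / (1 - t ^ q) < t ^ (p - 1) / (1 - t ^ p) := by
  have ht' := Ioo_subset_Ico_self ht
  rw [div_lt_div_iff₀ (one_sub_rpow_pos (hp.trans hpq) ht') (one_sub_rpow_pos hp ht')]
  have hcross : t ^ (q - 1) * t ^ p = t ^ (p - 1) * t ^ q := by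
    rw [← rpow_add ht.1, ← rpow_add ht.1]
    ring_nf
  have hpow : t ^ (q - 1) < t ^ (p - 1) := rpow_lt_rpow_of_exponent_gt ht.1 ht.2 (by linarith)
  linarith

theorem fpDensity_eq_exp (hp : 0 < p) (ht : t ∈ Ico (0 : ℝ) 1) :
    fpDensity p t = exp (-(log (1 - t ^ p) / p)) := by
  rw [fpDensity, rpow_def_of_pos (one_sub_rpow_pos hp ht)]
  ring_nf

theorem fpDensity_mul_lt_mul (hp : 0 < p) (hpq : p < q) (ht : 0 < t) (htu : t < u) (hu : u < 1) :
    fpDensity p t * fpDensity q u < fpDensity p u * fpDensity q t := by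
  have hq := hp.trans hpq
  have ht' : t ∈ Ioo (0 : ℝ) 1 := ⟨ht, htu.trans hu⟩
  have hu' : u ∈ Ioo (0 : ℝ) 1 := ⟨ht.trans htu, hu⟩
  have hderiv : ∀ x ∈ Ioo (0 : ℝ) 1, HasDerivAt
      (fun x => -(log (1 - x ^ p) / p) - -(log (1 - x ^ q) / q))
      (x ^ (p - 1) / (1 - x ^ p) - x ^ (q - 1) / (1 - x ^ q)) x := fun x hx =>
    (hasDerivAt_neg_log_one_sub_rpow_div hp hx).sub (hasDerivAt_neg_log_one_sub_rpow_div hq hx)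
  have hmono : StrictMonoOn (fun x => -(log (1 - x ^ p) / p) - -(log (1 - x ^ q) / q))
      (Ioo 0 1) := by
    refine strictMonoOn_of_deriv_pos (convex_Ioo 0 1)
      (fun x hx => (hderiv x hx).continuousAt.continuousWithinAt) fun x hx => ?_
    rw [interior_Ioo] at hx
    rw [(hderiv x hx).deriv]
    exact sub_pos.2 (rpow_sub_one_div_one_sub_rpow_lt hp hpq hx)
  have hlog := hmono ht' hu' htu
  rw [fpDensity_eq_exp hp (Ioo_subset_Ico_self ht'), fpDensity_eq_exp hq (Ioo_subset_Ico_self hu'),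
    fpDensity_eq_exp hp (Ioo_subset_Ico_self hu'), fpDensity_eq_exp hq (Ioo_subset_Ico_self ht'),
    ← exp_add, ← exp_add, exp_lt_exp]
  linarith

theorem fpDensity_le_one_sub_rpow (hp : 1 ≤ p) (ht : t ∈ Ioo (0 : ℝ) 1) :
    fpDensity p t ≤ (1 - t) ^ (-(1 / p)) := by
  have hpow : t ^ p ≤ t := by
    simpa using rpow_le_rpow_of_exponent_ge ht.1 ht.2.le hp
  exact rpow_le_rpow_of_nonpos (by linarith [ht.2]) (by linarith)
    (neg_nonpos.2 (one_div_nonneg.2 (by linarith)))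

theorem intervalIntegrable_fpDensity (hp : 1 < p) :
    IntervalIntegrable (fpDensity p) volume 0 1 := by
  have hp0 : 0 < p := one_pos.trans hp
  have hexp : -1 < -(1 / p) := neg_lt_neg ((div_lt_one hp0).2 hp)
  have hdom := (intervalIntegrable_rpow' (a := 1) (b := 0) hexp).comp_sub_left 1
  rw [sub_self, sub_zero, intervalIntegrable_iff_integrableOn_Ioo_of_le zero_le_one] at hdom
  rw [intervalIntegrable_iff_integrableOn_Ioo_of_le zero_le_one]
  have hmeas : Measurable (fpDensity p) := by
    unfold fpDensity
    fun_prop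
  refine hdom.mono' hmeas.aestronglyMeasurable
    ((ae_restrict_iff' measurableSet_Ioo).2 (.of_forall fun t ht => ?_))
  rw [norm_of_nonneg (one_pos.trans (one_lt_fpDensity hp0 ht)).le]
  exact fpDensity_le_one_sub_rpow hp.le ht

end Density

section Primitive

variable {p q y : ℝ}

theorem Fp_eq_integral_fpDensity (p y : ℝ) : Fp p y = ∫ t in (0 : ℝ)..y, fpDensity p t := rfl

theorem Fp_zero (p : ℝ) : Fp p 0 = 0 := integral_same

theorem Fp_one (p : ℝ) : Fp p 1 = pip p / 2 := by
  rw [pip, mul_div_cancel_left₀ _ two_ne_zero]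

theorem continuousOn_Fp (hp : 1 < p) : ContinuousOn (Fp p) (Icc 0 1) := by
  have := continuousOn_primitive_interval' (intervalIntegrable_fpDensity hp) left_mem_uIcc
  rwa [uIcc_of_le zero_le_one] at this

theorem sub_lt_Fp_sub (hp : 1 < p) {a b : ℝ} (ha : 0 ≤ a) (hab : a < b) (hb : b ≤ 1) :
    b - a < Fp p b - Fp p a := by
  have hint : ∀ {c d : ℝ}, c ∈ Icc (0 : ℝ) 1 → d ∈ Icc (0 : ℝ) 1 →
      IntervalIntegrable (fpDensity p) volume c d := fun hc hd =>
    (intervalIntegrable_fpDensity hp).mono_set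
      (uIcc_subset_uIcc (Icc_subset_uIcc hc) (Icc_subset_uIcc hd))
  have ha' : a ∈ Icc (0 : ℝ) 1 := ⟨ha, hab.le.trans hb⟩
  have hb' : b ∈ Icc (0 : ℝ) 1 := ⟨ha.trans hab.le, hb⟩
  have h0 : (0 : ℝ) ∈ Icc (0 : ℝ) 1 := by simp
  rw [Fp_eq_integral_fpDensity, Fp_eq_integral_fpDensity,
    integral_interval_sub_left (hint h0 hb') (hint h0 ha')]
  have := integral_lt_integral_of_forall_Ioo_lt hab (intervalIntegrable_const (c := (1 : ℝ)))
    (hint ha' hb') fun t ht =>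
      one_lt_fpDensity (one_pos.trans hp) ⟨ha.trans_lt ht.1, ht.2.trans_le hb⟩
  simpa using this

theorem strictMonoOn_Fp (hp : 1 < p) : StrictMonoOn (Fp p) (Icc 0 1) := fun a ha b hb hab => by
  linarith [sub_lt_Fp_sub hp ha.1 hab hb.2]

theorem pip_pos (hp : 1 < p) : 0 < pip p := by
  linarith [Fp_one p, Fp_zero p, strictMonoOn_Fp hp (by simp) (by simp) zero_lt_one]

theorem abs_sub_le_abs_Fp_sub (hp : 1 < p) {a b : ℝ} (ha : a ∈ Icc (0 : ℝ) 1)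
    (hb : b ∈ Icc (0 : ℝ) 1) : |a - b| ≤ |Fp p a - Fp p b| := by
  wlog hab : a ≤ b generalizing a b
  · rw [abs_sub_comm a, abs_sub_comm (Fp p a)]
    exact this hb ha (le_of_not_ge hab)
  rcases hab.eq_or_lt with rfl | hlt
  · simp
  · rw [abs_sub_comm a, abs_sub_comm (Fp p a), abs_of_pos (sub_pos.2 hlt)]
    exact (sub_lt_Fp_sub hp ha.1 hlt hb.2).le.trans (le_abs_self _)

theorem surjOn_Fp_Icc (hp : 1 < p) : SurjOn (Fp p) (Icc 0 1) (Icc 0 (pip p / 2)) := by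
  have := intermediate_value_Icc zero_le_one (continuousOn_Fp hp)
  rwa [Fp_zero, Fp_one] at this

theorem surjOn_Fp_Ioo (hp : 1 < p) : SurjOn (Fp p) (Ioo 0 1) (Ioo 0 (pip p / 2)) := by
  have := intermediate_value_Ioo zero_le_one (continuousOn_Fp hp)
  rwa [Fp_zero, Fp_one] at this

theorem Fp_mul_pip_lt (hp : 1 < p) (hpq : p < q) (hy : y ∈ Ioo (0 : ℝ) 1) :
    Fp p y * pip q < Fp q y * pip p := by
  have := integral_mul_integral_lt_of_cross_lt hy.1 hy.2 (intervalIntegrable_fpDensity hp)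
    (intervalIntegrable_fpDensity (hp.trans hpq)) fun t ht u hu =>
      fpDensity_mul_lt_mul (one_pos.trans hp) hpq ht.1 (ht.2.trans hu.1) hu.2
  simp only [← Fp_eq_integral_fpDensity, Fp_one] at this
  linarith

theorem Fp_lt_mul_Fp_one (hp : 1 < p) (hy : y ∈ Ioo (0 : ℝ) 1) : Fp p y < y * Fp p 1 := by
  have := integral_mul_integral_lt_of_cross_lt hy.1 hy.2 (intervalIntegrable_fpDensity hp)
    (intervalIntegrable_const (c := (1 : ℝ))) fun t ht u hu => by
      rw [mul_one, mul_one]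
      exact strictMonoOn_fpDensity (one_pos.trans hp) ⟨ht.1.le, ht.2.trans hy.2⟩
        ⟨hy.1.le.trans hu.1.le, hu.2⟩ (ht.2.trans hu.1)
  simpa [← Fp_eq_integral_fpDensity] using this

theorem Fp_two (hy : y ∈ Icc (0 : ℝ) 1) : Fp 2 y = arcsin y := by
  have hderiv : ∀ t ∈ Ioo 0 y, HasDerivAt arcsin (fpDensity 2 t) t := by
    intro t ht
    have ht' : t ∈ Ico (0 : ℝ) 1 := ⟨ht.1.le, ht.2.trans_le hy.2⟩
    refine (hasDerivAt_arcsin (by linarith [ht.1]) ht'.2.ne).congr_deriv ?_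
    rw [fpDensity, rpow_neg (one_sub_rpow_pos two_pos ht').le, ← sqrt_eq_rpow, rpow_two, one_div]
  have hint : IntervalIntegrable (fpDensity 2) volume 0 y :=
    (intervalIntegrable_fpDensity one_lt_two).mono_set
      (uIcc_subset_uIcc_left (Icc_subset_uIcc hy))
  rw [Fp_eq_integral_fpDensity, integral_eq_sub_of_hasDerivAt_of_le hy.1
    continuous_arcsin.continuousOn hderiv hint, arcsin_zero, sub_zero]

theorem pip_two : pip 2 = π := by
  rw [pip, Fp_two (by simp), arcsin_one, mul_div_cancel₀ _ two_ne_zero]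

theorem leftInvOn_sin_Fp_two : LeftInvOn sin (Fp 2) (Icc 0 1) := fun y hy => by
  rw [Fp_two hy, sin_arcsin (by linarith [hy.1]) hy.2]

end Primitive

section Inverse

variable {p q x : ℝ} {s r : ℝ → ℝ}

theorem pip_mul_mem_Ioo (hp : 1 < p) (hx : x ∈ Ioo (0 : ℝ) (1 / 2)) :
    pip p * x ∈ Ioo 0 (pip p / 2) :=
  ⟨mul_pos (pip_pos hp) hx.1, by nlinarith [pip_pos hp, hx.2]⟩

theorem leftInvOn_Fp_lt_of_lt (hp : 1 < p) (hpq : p < q) (hs : LeftInvOn s (Fp p) (Icc 0 1))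
    (hr : LeftInvOn r (Fp q) (Icc 0 1)) (hx : x ∈ Ioo (0 : ℝ) (1 / 2)) :
    r (pip q * x) < s (pip p * x) := by
  have hq := hp.trans hpq
  obtain ⟨y, hy, hFy⟩ := surjOn_Fp_Ioo hp (pip_mul_mem_Ioo hp hx)
  obtain ⟨z, hz, hFz⟩ := surjOn_Fp_Ioo hq (pip_mul_mem_Ioo hq hx)
  have hy' := Ioo_subset_Icc_self hy
  have hz' := Ioo_subset_Icc_self hz
  rw [← hFy, ← hFz, hs hy', hr hz', ← (strictMonoOn_Fp hq).lt_iff_lt hz' hy', hFz]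
  have hcross := Fp_mul_pip_lt hp hpq hy
  rw [hFy] at hcross
  nlinarith [pip_pos hp]

theorem two_mul_lt_leftInvOn_Fp (hp : 1 < p) (hs : LeftInvOn s (Fp p) (Icc 0 1))
    (hx : x ∈ Ioo (0 : ℝ) (1 / 2)) : 2 * x < s (pip p * x) := by
  obtain ⟨y, hy, hFy⟩ := surjOn_Fp_Ioo hp (pip_mul_mem_Ioo hp hx)
  have hconcave := Fp_lt_mul_Fp_one hp hy
  rw [hFy, Fp_one] at hconcave
  rw [← hFy, hs (Ioo_subset_Icc_self hy)]
  nlinarith [pip_pos hp]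

theorem lipschitzOnWith_leftInvOn_Fp (hp : 1 < p) (hs : LeftInvOn s (Fp p) (Icc 0 1)) :
    LipschitzOnWith 1 s (Icc 0 (pip p / 2)) := by
  refine LipschitzOnWith.of_dist_le_mul fun x hx z hz => ?_
  obtain ⟨a, ha, rfl⟩ := surjOn_Fp_Icc hp hx
  obtain ⟨b, hb, rfl⟩ := surjOn_Fp_Icc hp hz
  rw [hs ha, hs hb, NNReal.coe_one, one_mul, dist_eq, dist_eq]
  exact abs_sub_le_abs_Fp_sub hp ha hb

theorem absolutelyContinuousOnInterval_leftInvOn_Fp (hp : 1 < p)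
    (hs : LeftInvOn s (Fp p) (Icc 0 1)) (hsymm : ∀ x, s (pip p / 2 - x) = s (pip p / 2 + x)) :
    AbsolutelyContinuousOnInterval (fun x => s (pip p * x)) 0 1 := by
  have hlip := lipschitzOnWith_Icc_of_reflection (lipschitzOnWith_leftInvOn_Fp hp hs) hsymm
  refine (hlip.comp (lipschitzWith_smul (pip p)).lipschitzOnWith
    fun x hx => ?_).absolutelyContinuousOnInterval
  rw [uIcc_of_le zero_le_one] at hx
  simp only [smul_eq_mul]
  constructor <;> nlinarith [pip_pos hp, hx.1, hx.2]

theorem two_mul_integral_mul_sin_pi_lt_leftInvOn_Fp (hp : 1 < p)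
    (hs : LeftInvOn s (Fp p) (Icc 0 1)) (hsymm : ∀ x, s (pip p / 2 - x) = s (pip p / 2 + x))
    {g : ℝ → ℝ} (hg : Continuous g) (hgs : ∀ x ∈ Ioo (0 : ℝ) (1 / 2), g x < s (pip p * x)) :
    2 * ∫ x in (0 : ℝ)..(1 / 2), g x * sin (π * x) <
      ∫ x in (0 : ℝ)..1, s (pip p * x) * sin (π * x) := by
  have hcont := (absolutelyContinuousOnInterval_leftInvOn_Fp hp hs hsymm).continuousOn
  rw [uIcc_of_le zero_le_one] at hcont
  refine two_mul_integral_mul_sin_pi_lt hcont hg (fun x => ?_) hgs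
  convert hsymm (pip p * x) using 2 <;> ring

theorem pip_mul_integral_deriv_mul_cos_pi (hp : 1 < p) (hs : LeftInvOn s (Fp p) (Icc 0 1))
    (hsymm : ∀ x, s (pip p / 2 - x) = s (pip p / 2 + x)) :
    pip p * ∫ x in (0 : ℝ)..1, deriv s (pip p * x) * cos (π * x) =
      π * ∫ x in (0 : ℝ)..1, s (pip p * x) * sin (π * x) := by
  have hleft : s (pip p * 0) = 0 := by
    simpa [Fp_zero] using hs (left_mem_Icc.2 zero_le_one)
  have hright : s (pip p * 1) = 0 := by
    have := hsymm (pip p / 2)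
    rwa [sub_self, add_halves, ← mul_zero (pip p), hleft, eq_comm, ← mul_one (pip p)] at this
  have hparts := integral_deriv_mul_cos_mul
    (absolutelyContinuousOnInterval_leftInvOn_Fp hp hs hsymm) hleft hright π
  simp only [deriv_comp_mul_left, smul_eq_mul, mul_assoc] at hparts
  rwa [integral_const_mul] at hparts

end Inverse

theorem first_fourier_coeff_bounds_general (p : ℝ) (hp : 1 < p) (s : ℝ → ℝ)
    (hinv : ∀ y ∈ Icc (0 : ℝ) 1, s (Fp p y) = y)
    (hsym : ∀ x, s (pip p / 2 - x) = s (pip p / 2 + x)) :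
    (p < 2 →
      1 < 2 * ∫ x in (0 : ℝ)..1, s (pip p * x) * sin (π * x) ∧
      π / pip p < 2 * ∫ x in (0 : ℝ)..1, deriv s (pip p * x) * cos (π * x)) ∧
    8 / π ^ 2 < 2 * ∫ x in (0 : ℝ)..1, s (pip p * x) * sin (π * x) := by
  refine ⟨fun hp2 => ?_, ?_⟩
  · have hsin : ∀ x ∈ Ioo (0 : ℝ) (1 / 2), sin (π * x) < s (pip p * x) := fun x hx =>
      pip_two ▸ leftInvOn_Fp_lt_of_lt hp hp2 hinv leftInvOn_sin_Fp_two hx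
    have ha := two_mul_integral_mul_sin_pi_lt_leftInvOn_Fp hp hinv hsym (by fun_prop) hsin
    rw [integral_sin_pi_mul_sin_pi_half] at ha
    refine ⟨by linarith, ?_⟩
    rw [div_lt_iff₀' (pip_pos hp), mul_left_comm, pip_mul_integral_deriv_mul_cos_pi hp hinv hsym]
    nlinarith [pi_pos]
  · have ha := two_mul_integral_mul_sin_pi_lt_leftInvOn_Fp hp hinv hsym (by fun_prop)
      fun x hx => two_mul_lt_leftInvOn_Fp hp hinv hx
    rw [integral_two_mul_mul_sin_pi_half] at ha
    linear_combination 2 * ha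

theorem first_fourier_coeff_bounds (p : ℝ) (hp : 1 < p) (s : ℝ → ℝ)
    (hinv₁ : ∀ y ∈ Icc (0:ℝ) 1, s (Fp p y) = y)
    (hinv₂ : ∀ x ∈ Icc (0:ℝ) (pip p / 2), Fp p (s x) = x)
    (hodd : ∀ x, s (-x) = -s x)
    (hsym : ∀ x, s (pip p / 2 - x) = s (pip p / 2 + x)) :
    (p < 2 →
      1 ≤ 2 * ∫ x in (0:ℝ)..1, s (pip p * x) * Real.sin (π * x) ∧
      π / pip p ≤ 2 * ∫ x in (0:ℝ)..1, deriv s (pip p * x) * Real.cos (π * x)) ∧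
    (2 < p →
      8 / π^2 < 2 * ∫ x in (0:ℝ)..1, s (pip p * x) * Real.sin (π * x)) := by
  obtain ⟨hlt, hgt⟩ := first_fourier_coeff_bounds_general p hp s hinv₁ hsym
  exact ⟨fun hp2 => (hlt hp2).imp le_of_lt le_of_lt, fun _ => hgt⟩
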